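/- Let n ≥ 2, F ∈ 𝔉_n, and let k, k₀ be integers with 1 ≤ k, k₀ ≤ n. Let λ ≠ μ be complex numbers. Let Y be a solution of Y' = (F + Λ(λ))Y on [0,1] with Y_j(0) = δ_{j,k₀−1} for 0 ≤ j ≤ k₀−1 and Y_j(1) = 0 for 0 ≤ j ≤ n−k₀−1, and let Z be a solution of the star system Z' = (F* + (−1)ⁿΛ(μ))Z on [0,1] with Z_j(0) = δ_{j,k−1} for 0 ≤ j ≤ k−1 and Z_j(1) = 0 for 0 ≤ j ≤ n−k−1. Then for all x ∈ [0,1]: if k + k₀ > n+1 then ⟨Z,Y⟩(x) = (λ−μ)·∫₀ˣ Z₀(t)Y₀(t) dt; if k + k₀ = n+1 then ⟨Z,Y⟩(x) = (−1)^{k+1} + (λ−μ)·∫₀ˣ Z₀(t)Y₀(t) dt; and if k + k₀ < n+1 then ⟨Z,Y⟩(x) = −(λ−μ)·∫ₓ¹ Z₀(t)Y₀(t) dt. (Integral representation of the function D̃_{k,k₀}(x,μ,λ)·(λ−μ) from the proof of Lemma 4.1.) -/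

import Mathlib

/-!
The bracket of a solution `Z` of the star system with a solution `Y` of the original one is
absolutely continuous with derivative `(λ - μ) Z₀ Y₀`: the sign pattern in the definition of `F*`
makes all contributions of `F` cancel (`bracket_algebra`), and only the corner entries of the two
matrices `Λ` survive. Hence the bracket at `b` minus the bracket at `0` equals
`(λ - μ) ∫₀ᵇ Z₀ Y₀` (`bracket_eq`).

The initial conditions kill every term of the bracket at `0` except those with
`k - 1 ≤ j ≤ n - k₀`: there are none if `k + k₀ > n + 1`, and only `j = k - 1`, with value
`(-1)^(k-1)`, if `k + k₀ = n + 1`. The conditions at `1` leave only the terms with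
`n - k ≤ j ≤ k₀ - 1`, of which there are none if `k + k₀ < n + 1`.

Since solutions are given in integral form, with merely integrable coefficients, the product rule
needed is integration by parts for primitives of integrable functions. It follows from Fubini's
theorem by splitting a square along its diagonal (`integral_mul_integral`).
-/

open MeasureTheory

/-- The matrix `Λ(λ)`: the `(n,1)` entry (0-based: `(n-1,0)`) equals `λ`, others `0`. -/
def LambdaMat (n : ℕ) (lam : ℂ) : Matrix (Fin n) (Fin n) ℂ :=
  fun k j => if (k : ℕ) = n - 1 ∧ (j : ℕ) = 0 then lam else 0

/-- The class `𝔉_n`: integrable entries, `f_{k,k+1} = 1`, `f_{k,j} = 0` for `j > k+1`,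
zero trace (1-based indices of the paper correspond to 0-based indices here). -/
def IsFrakF (n : ℕ) (F : ℝ → Matrix (Fin n) (Fin n) ℂ) : Prop :=
  (∀ k j : Fin n, IntegrableOn (fun x => F x k j) (Set.Icc (0:ℝ) 1)) ∧
  (∀ x : ℝ, ∀ k j : Fin n, (j : ℕ) = (k : ℕ) + 1 → F x k j = 1) ∧
  (∀ x : ℝ, ∀ k j : Fin n, (j : ℕ) > (k : ℕ) + 1 → F x k j = 0) ∧
  (∀ x : ℝ, ∑ k : Fin n, F x k k = 0)

/-- The matrix `F*`: `f*_{k,j} = (-1)^{k+j+1} f_{n-j+1,n-k+1}` (1-based), i.e. 0-based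
`f*_{a,b} = (-1)^{a+b+1} f_{n-1-b,n-1-a}`. -/
def FStar (n : ℕ) (F : ℝ → Matrix (Fin n) (Fin n) ℂ) : ℝ → Matrix (Fin n) (Fin n) ℂ :=
  fun x a b => (-1 : ℂ) ^ ((a : ℕ) + (b : ℕ) + 1) * F x b.rev a.rev

/-- A solution of the system `Y' = (F + Λ(λ)) Y` on `[0,1]`, in integral form. -/
def IsSol (n : ℕ) (F : ℝ → Matrix (Fin n) (Fin n) ℂ) (lam : ℂ) (Y : ℝ → Fin n → ℂ) : Prop :=
  ContinuousOn Y (Set.Icc (0:ℝ) 1) ∧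
  ∀ x ∈ Set.Icc (0:ℝ) 1, ∀ j : Fin n,
    Y x j = Y 0 j + ∫ t in (0:ℝ)..x, ((F t + LambdaMat n lam).mulVec (Y t)) j

/-- A solution of the star system `Z' = (F* + (-1)^n Λ(μ)) Z` on `[0,1]`. -/
def IsSolStar (n : ℕ) (F : ℝ → Matrix (Fin n) (Fin n) ℂ) (mu : ℂ) (Z : ℝ → Fin n → ℂ) : Prop :=
  IsSol n (FStar n F) ((-1 : ℂ) ^ n * mu) Z

/-- The Lagrange bracket `⟨Z,Y⟩(x) = Σ_{j=0}^{n-1} (-1)^j Z_j(x) Y_{n-1-j}(x)`. -/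
noncomputable def bracket (n : ℕ) (Z Y : ℝ → Fin n → ℂ) (x : ℝ) : ℂ :=
  ∑ j : Fin n, (-1 : ℂ) ^ (j : ℕ) * Z x j * Y x j.rev

/-- Integration by parts for primitives vanishing at `0`: the product integral over the square
`(0, x]²` is split along the diagonal. -/
lemma integral_mul_integral {f g : ℝ → ℂ} {x : ℝ} (hx : 0 ≤ x)
    (hf : IntegrableOn f (Set.Ioc 0 x)) (hg : IntegrableOn g (Set.Ioc 0 x)) :
    IntegrableOn (fun s => f s * ∫ t in (0:ℝ)..s, g t) (Set.Ioc 0 x) ∧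
    IntegrableOn (fun t => (∫ s in (0:ℝ)..t, f s) * g t) (Set.Ioc 0 x) ∧
    (∫ s in (0:ℝ)..x, f s) * (∫ t in (0:ℝ)..x, g t) =
      (∫ s in (0:ℝ)..x, f s * ∫ t in (0:ℝ)..s, g t) +
        ∫ t in (0:ℝ)..x, (∫ s in (0:ℝ)..t, f s) * g t := by
  set μ := volume.restrict (Set.Ioc 0 x) with hμ
  have hint : Integrable (fun z : ℝ × ℝ => f z.1 * g z.2) (μ.prod μ) :=
    Integrable.mul_prod hf hg
  have hT : MeasurableSet {z : ℝ × ℝ | z.2 ≤ z.1} := measurableSet_le measurable_snd measurable_fst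
  have h1 := hint.indicator hT
  have h2 := hint.indicator hT.compl
  have e1 : ∀ s ∈ Set.Ioc 0 x,
      (∫ t, ({z : ℝ × ℝ | z.2 ≤ z.1}.indicator (fun z => f z.1 * g z.2)) (s, t) ∂μ) =
        f s * ∫ t in (0:ℝ)..s, g t := by
    intro s hs
    rw [intervalIntegral.integral_of_le hs.1.le, ← integral_const_mul]
    have : (fun t => ({z : ℝ × ℝ | z.2 ≤ z.1}.indicator (fun z => f z.1 * g z.2)) (s, t)) =
        (Set.Iic s).indicator (fun t => f s * g t) := by
      ext t; simp [Set.indicator]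
    rw [this, integral_indicator measurableSet_Iic, hμ, Measure.restrict_restrict measurableSet_Iic]
    congr 2
    ext t
    simp only [Set.mem_inter_iff, Set.mem_Iic, Set.mem_Ioc]
    exact ⟨fun h => ⟨h.2.1, h.1⟩, fun h => ⟨h.2, h.1, h.2.trans hs.2⟩⟩
  have e2 : ∀ t ∈ Set.Ioc 0 x,
      (∫ s, ({z : ℝ × ℝ | z.2 ≤ z.1}ᶜ.indicator (fun z => f z.1 * g z.2)) (s, t) ∂μ) =
        (∫ s in (0:ℝ)..t, f s) * g t := by
    intro t ht
    rw [intervalIntegral.integral_of_le ht.1.le, ← integral_mul_const]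
    have : (fun s => ({z : ℝ × ℝ | z.2 ≤ z.1}ᶜ.indicator (fun z => f z.1 * g z.2)) (s, t)) =
        (Set.Iio t).indicator (fun s => f s * g t) := by
      ext s; simp [Set.indicator]
    rw [this, integral_indicator measurableSet_Iio, hμ, Measure.restrict_restrict measurableSet_Iio,
      integral_Ioc_eq_integral_Ioo]
    congr 2
    ext s
    simp only [Set.mem_inter_iff, Set.mem_Iio, Set.mem_Ioc, Set.mem_Ioo]
    exact ⟨fun h => ⟨h.2.1, h.1⟩, fun h => ⟨h.2, h.1, h.2.le.trans ht.2⟩⟩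
  refine ⟨?_, ?_, ?_⟩
  · exact h1.integral_prod_left.congr
      (ae_restrict_of_forall_mem measurableSet_Ioc e1)
  · exact h2.integral_prod_right.congr
      (ae_restrict_of_forall_mem measurableSet_Ioc e2)
  · simp only [intervalIntegral.integral_of_le hx]
    rw [← setIntegral_congr_fun measurableSet_Ioc e1, ← setIntegral_congr_fun measurableSet_Ioc e2,
      ← hμ, ← integral_prod _ h1, ← integral_prod_symm _ h2, integral_indicator hT,
      integral_indicator hT.compl, integral_add_compl hT hint, integral_prod_mul]

/-- The product rule for absolutely continuous functions, in integral form. -/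
lemma mul_eq_add_integral {f g u v : ℝ → ℂ} {x : ℝ} (hx : 0 ≤ x)
    (hf : IntegrableOn f (Set.Ioc 0 x)) (hg : IntegrableOn g (Set.Ioc 0 x))
    (hu : ∀ s ∈ Set.Icc 0 x, u s = u 0 + ∫ t in (0:ℝ)..s, f t)
    (hv : ∀ s ∈ Set.Icc 0 x, v s = v 0 + ∫ t in (0:ℝ)..s, g t) :
    IntegrableOn (fun t => f t * v t + u t * g t) (Set.Ioc 0 x) ∧
    u x * v x = u 0 * v 0 + ∫ t in (0:ℝ)..x, (f t * v t + u t * g t) := by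
  obtain ⟨i1, i2, h⟩ := integral_mul_integral hx hf hg
  have hc : ∀ t ∈ Set.Ioc 0 x, (f t * v 0 + f t * ∫ s in (0:ℝ)..t, g s) +
      (u 0 * g t + (∫ s in (0:ℝ)..t, f s) * g t) = f t * v t + u t * g t := by
    intro t ht
    rw [hu t ⟨ht.1.le, ht.2⟩, hv t ⟨ht.1.le, ht.2⟩]
    ring
  have j1 : IntegrableOn (fun t => f t * v 0) (Set.Ioc 0 x) := hf.mul_const _
  have j2 : IntegrableOn (fun t => u 0 * g t) (Set.Ioc 0 x) := hg.const_mul _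
  refine ⟨((j1.add i1).add (j2.add i2)).congr
    (ae_restrict_of_forall_mem measurableSet_Ioc hc), ?_⟩
  rw [hu x ⟨hx, le_rfl⟩, hv x ⟨hx, le_rfl⟩]
  simp only [intervalIntegral.integral_of_le hx] at h ⊢
  rw [← setIntegral_congr_fun measurableSet_Ioc hc,
    integral_add (f := fun t => f t * v 0 + f t * ∫ s in (0:ℝ)..t, g s)
      (g := fun t => u 0 * g t + (∫ s in (0:ℝ)..t, f s) * g t) (j1.add i1) (j2.add i2),
    integral_add j1 i1, integral_add j2 i2, integral_mul_const, integral_const_mul]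
  linear_combination h

lemma integrableOn_rhs {n : ℕ} {F : ℝ → Matrix (Fin n) (Fin n) ℂ} {lam : ℂ} {Y : ℝ → Fin n → ℂ}
    (hF : ∀ k j : Fin n, IntegrableOn (fun x => F x k j) (Set.Icc (0:ℝ) 1))
    (hY : ContinuousOn Y (Set.Icc (0:ℝ) 1)) (j : Fin n) :
    IntegrableOn (fun t => ((F t + LambdaMat n lam).mulVec (Y t)) j) (Set.Icc (0:ℝ) 1) := by
  simp only [Matrix.mulVec, dotProduct, Matrix.add_apply]
  refine integrable_finsetSum _ fun i _ => ?_
  refine IntegrableOn.mul_continuousOn ?_ (continuousOn_pi.1 hY i) isCompact_Icc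
  exact (hF j i).add (integrableOn_const (by simp))

lemma lambdaMat_mulVec {n : ℕ} (hn : 0 < n) (lam : ℂ) (y : Fin n → ℂ) (j : Fin n) :
    (LambdaMat n lam).mulVec y j = if (j : ℕ) = n - 1 then lam * y ⟨0, hn⟩ else 0 := by
  simp only [Matrix.mulVec, dotProduct, LambdaMat]
  rw [Finset.sum_eq_single (⟨0, hn⟩ : Fin n)]
  · simp
  · intro b _ hb
    have : (b : ℕ) ≠ 0 := fun h => hb (Fin.ext h)
    simp [this]
  · simp

/-- The derivative of the bracket: the terms with `F` cancel, and of the two matrices `Λ` the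
entries `λ` (at `j = 0`) and `(-1)ⁿ μ` (at `j = n - 1`) remain. -/
lemma bracket_algebra {n : ℕ} (hn : 0 < n) (F : ℝ → Matrix (Fin n) (Fin n) ℂ) (lam mu : ℂ)
    (t : ℝ) (y z : Fin n → ℂ) :
    ∑ j : Fin n, (-1 : ℂ) ^ (j : ℕ) *
      (((FStar n F t + LambdaMat n ((-1) ^ n * mu)).mulVec z) j * y j.rev +
        z j * ((F t + LambdaMat n lam).mulVec y) j.rev) =
      (lam - mu) * (z ⟨0, hn⟩ * y ⟨0, hn⟩) := by
  have hcancel : ∑ j : Fin n, (-1 : ℂ) ^ (j : ℕ) * ((FStar n F t).mulVec z j * y j.rev) =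
      - ∑ j : Fin n, (-1 : ℂ) ^ (j : ℕ) * (z j * (F t).mulVec y j.rev) := by
    simp only [Matrix.mulVec, dotProduct, FStar, Finset.sum_mul, Finset.mul_sum]
    rw [Finset.sum_comm, ← Finset.sum_neg_distrib]
    refine Finset.sum_congr rfl fun b _ => ?_
    rw [← Finset.sum_neg_distrib, ← Equiv.sum_comp Fin.revPerm]
    refine Finset.sum_congr rfl fun j _ => ?_
    simp only [Fin.revPerm_apply, Fin.rev_rev]
    have : (-1 : ℂ) ^ (j.rev : ℕ) * (-1) ^ (j.rev : ℕ) = 1 := by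
      rw [← mul_pow]; simp
    rw [pow_succ, pow_add]
    linear_combination (-(-1 : ℂ) ^ (b : ℕ) * F t b.rev j * z b * y j) * this
  have hmu : ∑ j : Fin n, (-1 : ℂ) ^ (j : ℕ) *
      ((LambdaMat n ((-1) ^ n * mu)).mulVec z j * y j.rev) =
      - mu * (z ⟨0, hn⟩ * y ⟨0, hn⟩) := by
    rw [Finset.sum_eq_single (⟨n - 1, by omega⟩ : Fin n)]
    · have hr : (⟨n - 1, by omega⟩ : Fin n).rev = ⟨0, hn⟩ := by
        ext; simp only [Fin.val_rev]; omega
      have hp : (-1 : ℂ) ^ (n - 1) * (-1) ^ n = -1 := by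
        rw [← pow_add]; exact Odd.neg_one_pow ⟨n - 1, by omega⟩
      rw [lambdaMat_mulVec hn, hr]
      simp only [if_true]
      linear_combination (mu * z ⟨0, hn⟩ * y ⟨0, hn⟩) * hp
    · intro b _ hb
      rw [lambdaMat_mulVec hn, if_neg (fun h => hb (Fin.ext h))]
      simp
    · simp
  have hlam : ∑ j : Fin n, (-1 : ℂ) ^ (j : ℕ) * (z j * (LambdaMat n lam).mulVec y j.rev) =
      lam * (z ⟨0, hn⟩ * y ⟨0, hn⟩) := by
    rw [Finset.sum_eq_single (⟨0, hn⟩ : Fin n)]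
    · rw [lambdaMat_mulVec hn, if_pos (by simp [Fin.val_rev])]
      simp only [pow_zero]
      ring
    · intro b _ hb
      have : (b : ℕ) ≠ 0 := fun h => hb (Fin.ext h)
      rw [lambdaMat_mulVec hn, if_neg (by rw [Fin.val_rev]; omega)]
      simp
    · simp
  simp only [Matrix.add_mulVec, Pi.add_apply, add_mul, mul_add, Finset.sum_add_distrib]
  rw [hcancel, hmu, hlam]
  ring

/-- The Lagrange identity. -/
lemma bracket_eq {n : ℕ} (hn : 0 < n) {F : ℝ → Matrix (Fin n) (Fin n) ℂ} (hF : IsFrakF n F)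
    {lam mu : ℂ} {Y Z : ℝ → Fin n → ℂ} (hY : IsSol n F lam Y) (hZ : IsSolStar n F mu Z)
    {x : ℝ} (hx : x ∈ Set.Icc (0:ℝ) 1) :
    bracket n Z Y x = bracket n Z Y 0 +
      (lam - mu) * ∫ t in (0:ℝ)..x, Z t ⟨0, hn⟩ * Y t ⟨0, hn⟩ := by
  have hFs : ∀ k j : Fin n, IntegrableOn (fun x => FStar n F x k j) (Set.Icc (0:ℝ) 1) :=
    fun k j => (hF.1 j.rev k.rev).const_mul _
  have hsub : Set.Ioc 0 x ⊆ Set.Icc (0:ℝ) 1 := fun t ht => ⟨ht.1.le, ht.2.trans hx.2⟩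
  have key := fun j : Fin n => mul_eq_add_integral hx.1
    ((integrableOn_rhs (lam := (-1) ^ n * mu) hFs hZ.1 j).mono_set hsub)
    ((integrableOn_rhs (lam := lam) hF.1 hY.1 j.rev).mono_set hsub)
    (u := fun t => Z t j) (v := fun t => Y t j.rev)
    (fun s hs => hZ.2 s ⟨hs.1, hs.2.trans hx.2⟩ j)
    (fun s hs => hY.2 s ⟨hs.1, hs.2.trans hx.2⟩ j.rev)
  rw [← intervalIntegral.integral_const_mul]
  rw [intervalIntegral.integral_congr fun t _ =>
    (bracket_algebra hn F lam mu t (Y t) (Z t)).symm]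
  rw [intervalIntegral.integral_finsetSum]
  · simp only [bracket, mul_assoc]
    rw [← Finset.sum_add_distrib]
    refine Finset.sum_congr rfl fun j _ => ?_
    rw [(key j).2, intervalIntegral.integral_const_mul, mul_add]
  · intro j _
    rw [intervalIntegrable_iff_integrableOn_Ioc_of_le hx.1]
    exact (key j).1.const_mul _

/-- Integral representation of `D̃_{k,k₀}(x,μ,λ)·(λ-μ)` (proof of Lemma 4.1): with the stated
boundary conditions for `Y` (Weyl-type conditions of `Φ_{k₀}`) and `Z` (of `Φ*_k`), the bracket
`⟨Z,Y⟩(x)` has the three displayed forms according to the sign of `k + k₀ - (n+1)`. -/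
theorem statement1 (n : ℕ) (hn : 2 ≤ n) (F : ℝ → Matrix (Fin n) (Fin n) ℂ)
    (hF : IsFrakF n F) (k k₀ : ℕ) (hk1 : 1 ≤ k) (hkn : k ≤ n) (hk₀1 : 1 ≤ k₀) (hk₀n : k₀ ≤ n)
    (lam mu : ℂ) (hlm : lam ≠ mu) (Y Z : ℝ → Fin n → ℂ)
    (hY : IsSol n F lam Y)
    (hY0 : ∀ j : Fin n, (j : ℕ) ≤ k₀ - 1 → Y 0 j = if (j : ℕ) = k₀ - 1 then 1 else 0)
    (hY1 : ∀ j : Fin n, (j : ℕ) + k₀ + 1 ≤ n → Y 1 j = 0)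
    (hZ : IsSolStar n F mu Z)
    (hZ0 : ∀ j : Fin n, (j : ℕ) ≤ k - 1 → Z 0 j = if (j : ℕ) = k - 1 then 1 else 0)
    (hZ1 : ∀ j : Fin n, (j : ℕ) + k + 1 ≤ n → Z 1 j = 0) :
    ∀ x ∈ Set.Icc (0:ℝ) 1,
      (k + k₀ > n + 1 →
        bracket n Z Y x =
          (lam - mu) * ∫ t in (0:ℝ)..x, Z t ⟨0, by omega⟩ * Y t ⟨0, by omega⟩) ∧
      (k + k₀ = n + 1 →
        bracket n Z Y x = (-1 : ℂ) ^ (k + 1) +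
          (lam - mu) * ∫ t in (0:ℝ)..x, Z t ⟨0, by omega⟩ * Y t ⟨0, by omega⟩) ∧
      (k + k₀ < n + 1 →
        bracket n Z Y x =
          -((lam - mu) * ∫ t in x..(1:ℝ), Z t ⟨0, by omega⟩ * Y t ⟨0, by omega⟩)) := by
  intro x hx
  have hn0 : 0 < n := by omega
  have hL := bracket_eq hn0 hF hY hZ hx
  refine ⟨fun h => ?_, fun h => ?_, fun h => ?_⟩
  · have h0 : bracket n Z Y 0 = 0 := by
      refine Finset.sum_eq_zero fun j _ => ?_
      by_cases hj : (j : ℕ) + 1 < k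
      · rw [hZ0 j (by omega), if_neg (by omega)]
        simp
      · have := Fin.val_rev j
        rw [hY0 j.rev (by omega), if_neg (by omega)]
        simp
    rw [hL, h0, zero_add]
  · have h0 : bracket n Z Y 0 = (-1 : ℂ) ^ (k + 1) := by
      rw [bracket, Finset.sum_eq_single (⟨k - 1, by omega⟩ : Fin n)]
      · have hr := Fin.val_rev (⟨k - 1, by omega⟩ : Fin n)
        simp only at hr
        rw [hZ0 _ le_rfl, hY0 _ (by omega), if_pos rfl, if_pos (by omega),
          show k + 1 = k - 1 + 2 by omega, pow_add]
        simp
      · intro j _ hne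
        have hne' : (j : ℕ) ≠ k - 1 := fun e => hne (Fin.ext e)
        by_cases hj : (j : ℕ) + 1 < k
        · rw [hZ0 j (by omega), if_neg (by omega)]
          simp
        · have := Fin.val_rev j
          rw [hY0 j.rev (by omega), if_neg (by omega)]
          simp
      · simp
    rw [hL, h0]
  · have h1 : bracket n Z Y 1 = 0 := by
      refine Finset.sum_eq_zero fun j _ => ?_
      by_cases hj : (j : ℕ) + k + 1 ≤ n
      · rw [hZ1 j hj]
        simp
      · have := Fin.val_rev j
        rw [hY1 j.rev (by omega)]
        simp
    have hL1 := bracket_eq hn0 hF hY hZ (x := 1) ⟨zero_le_one, le_rfl⟩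
    have hc : ContinuousOn (fun t => Z t ⟨0, hn0⟩ * Y t ⟨0, hn0⟩) (Set.Icc (0:ℝ) 1) :=
      (continuousOn_pi.1 hZ.1 _).mul (continuousOn_pi.1 hY.1 _)
    have hadd := intervalIntegral.integral_add_adjacent_intervals
      (μ := volume) (a := 0) (b := x) (c := 1)
      ((hc.mono (Set.Icc_subset_Icc_right hx.2)).intervalIntegrable_of_Icc hx.1)
      ((hc.mono (Set.Icc_subset_Icc_left hx.1)).intervalIntegrable_of_Icc hx.2)
    rw [h1, ← hadd] at hL1
    rw [hL]
    linear_combination -hL1
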